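/- arXiv:2602.10355 — 2 statements merged into one kernel-verified Lean document; each statement's English description precedes it below -/
import Mathlib

section
/- Let G be a tree (connected acyclic simple graph) on the vertex set {0,1,…,N} with N ≥ 1, rooted at bus 0, and let x_e > 0 be the reactance of each edge e of G. For each bus m ∈ {1,…,N}, let E_m denote the set of edges on the unique path in G from bus 0 to bus m. Define the matrix X ∈ ℝ^{N×N} by X_{mn} := 2 Σ_{e ∈ E_m ∩ E_n} x_e. Then X is symmetric positive definite. -/
open Matrix

/-- **Positive definiteness of the LinDistFlow sensitivity matrix.**
Let `G` be a tree on the buses `{0,1,…,N}` (`N ≥ 1`) rooted at bus `0`, with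
positive reactances `x_e > 0` on its edges. For each bus `m ∈ {1,…,N}` let `E_m` be
the set of edges of the unique path in `G` from `0` to `m` (here realized by a path
`P m` from `0` to `m`). Then the matrix `X` with entries
`X_{mn} = 2 Σ_{e ∈ E_m ∩ E_n} x_e` is symmetric positive definite. -/
theorem sensitivity_matrix_posDef
    (N : ℕ) (hN : 1 ≤ N)
    (G : SimpleGraph (Fin (N + 1))) (hG : G.IsTree)
    (x : Sym2 (Fin (N + 1)) → ℝ) (hx : ∀ e ∈ G.edgeSet, 0 < x e)
    (P : (m : Fin (N + 1)) → G.Walk 0 m) (hP : ∀ m, (P m).IsPath) :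
    Matrix.PosDef (Matrix.of fun m n : Fin N =>
      2 * ∑ e ∈ (P m.succ).edges.toFinset ∩ (P n.succ).edges.toFinset, x e) := by
  classical
  refine Matrix.PosDef.of_dotProduct_mulVec_pos ?_ ?_
  · ext m n
    simp [Matrix.conjTranspose_apply, Finset.inter_comm]
  intro v hv
  set S : Finset (Sym2 (Fin (N+1))) := Finset.univ.filter (fun e => e ∈ G.edgeSet) with hS
  set a : Fin N → Sym2 (Fin (N+1)) → ℝ := fun m e => if e ∈ (P m.succ).edges then 1 else 0 with ha
  have hent : ∀ m n : Fin N, ∑ e ∈ (P m.succ).edges.toFinset ∩ (P n.succ).edges.toFinset, x e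
      = ∑ e ∈ S, x e * (a m e * a n e) := by
    intro m n
    have hsub : (P m.succ).edges.toFinset ∩ (P n.succ).edges.toFinset ⊆ S := by
      intro e he
      simp only [Finset.mem_inter, List.mem_toFinset] at he
      simp only [hS, Finset.mem_filter, Finset.mem_univ, true_and]
      exact (P m.succ).edges_subset_edgeSet he.1
    rw [← Finset.sum_subset hsub]
    · refine Finset.sum_congr rfl fun e he => ?_
      simp only [Finset.mem_inter, List.mem_toFinset] at he
      simp [ha, he.1, he.2]
    · intro e _ he
      simp only [Finset.mem_inter, List.mem_toFinset] at he
      by_cases h1 : e ∈ (P m.succ).edges <;> by_cases h2 : e ∈ (P n.succ).edges <;>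
        simp_all
  have key : star v ⬝ᵥ ((Matrix.of fun m n : Fin N =>
      2 * ∑ e ∈ (P m.succ).edges.toFinset ∩ (P n.succ).edges.toFinset, x e) *ᵥ v)
      = ∑ e ∈ S, 2 * x e * (∑ m, a m e * v m) ^ 2 := by
    simp only [dotProduct, mulVec, Matrix.of_apply, hent, Pi.star_apply, star_trivial]
    simp only [Finset.mul_sum, Finset.sum_mul, sq]
    conv_rhs => rw [Finset.sum_comm]
    refine Finset.sum_congr rfl fun m _ => ?_
    conv_rhs => rw [Finset.sum_comm]
    conv_lhs => rw [Finset.sum_comm]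
    rw [Finset.sum_comm]
    refine Finset.sum_congr rfl fun n _ => Finset.sum_congr rfl fun e _ => ?_
    ring
  rw [key]
  obtain ⟨m0, hm0⟩ : ∃ m, v m ≠ 0 := Function.ne_iff.mp hv
  obtain ⟨m, hm, hmax⟩ := Finset.exists_max_image (Finset.univ.filter fun m => v m ≠ 0)
    (fun m => (P m.succ).length) ⟨m0, by simpa using hm0⟩
  simp only [Finset.mem_filter, Finset.mem_univ, true_and] at hm hmax
  have hnn : ¬ (P m.succ).Nil := SimpleGraph.Walk.not_nil_of_ne (Fin.succ_ne_zero m).symm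
  have hmem : s((P m.succ).penultimate, m.succ) ∈ (P m.succ).edges :=
    SimpleGraph.Walk.mk_penultimate_end_mem_edges hnn
  have heG := (P m.succ).edges_subset_edgeSet hmem
  refine Finset.sum_pos' (fun e he => ?_) ⟨s((P m.succ).penultimate, m.succ), ?_, ?_⟩
  · have := hx e (by simpa [hS] using he)
    positivity
  · simpa only [hS, Finset.mem_filter, Finset.mem_univ, true_and] using heG
  have hsum : ∑ n, a n s((P m.succ).penultimate, m.succ) * v n = v m := by
    rw [Finset.sum_eq_single m]
    · simp only [ha, if_pos hmem, one_mul]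
    · intro n _ hnm
      by_contra hne
      have hvn : v n ≠ 0 := right_ne_zero_of_mul hne
      have hn : s((P m.succ).penultimate, m.succ) ∈ (P n.succ).edges := by
        by_contra h
        exact left_ne_zero_of_mul hne (if_neg h)
      have hsup := (P n.succ).snd_mem_support_of_mem_edges hn
      have hlt := SimpleGraph.Walk.length_takeUntil_lt hsup (fun h => hnm (Fin.succ_injective _ h.symm))
      have heq : (P n.succ).takeUntil m.succ hsup = P m.succ :=
        congrArg Subtype.val (hG.isAcyclic.path_unique ⟨_, (hP n.succ).takeUntil hsup⟩ ⟨_, hP m.succ⟩)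
      rw [heq] at hlt
      exact absurd (hmax n hvn) (not_le.mpr hlt)
    · simp
  rw [hsum]
  have := hx _ heG
  positivity
end

section
/- Let G be a tree (connected acyclic simple graph) on the vertex set {0,1,…,N} with N ≥ 1, rooted at bus 0, with reactances x_e > 0. Let X ∈ ℝ^{N×N} be defined by X_{mn} := 2 Σ_{e ∈ E_m ∩ E_n} x_e, where E_m is the set of edges on the unique path in G from 0 to m. Let L := Σ_{e = {i,j} ∈ edges(G)} (2 x_e)⁻¹ (e_i − e_j)(e_i − e_j)ᵀ ∈ ℝ^{N×N}, where e_k is the k-th standard basis vector of ℝ^N for k ∈ {1,…,N} and e_0 := 0. Then X · L = I, i.e., X⁻¹ = L; the inverse sensitivity matrix is the reduced weighted Laplacian of the grid. -/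
open Matrix

/-- For buses `{0,1,…,N}` with the substation bus `0` eliminated: the reduced
incidence vector of bus `k`, i.e. the `k`-th standard basis vector of `ℝ^N` for
`k ∈ {1,…,N}` and the zero vector for `k = 0`. -/
def incVec (N : ℕ) (k : Fin (N + 1)) : Fin N → ℝ :=
  fun i => if (i : ℕ) + 1 = (k : ℕ) then 1 else 0

/-- The rank-one matrix `M_e = (e_i − e_j)(e_i − e_j)ᵀ ∈ ℝ^{N×N}` of an undirected
edge `e = {i, j}` on the buses `{0,1,…,N}`. -/
def edgeMatSym (N : ℕ) : Sym2 (Fin (N + 1)) → Matrix (Fin N) (Fin N) ℝ :=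
  Sym2.lift ⟨fun i j =>
      Matrix.vecMulVec (incVec N i - incVec N j) (incVec N i - incVec N j),
    by
      intro i j
      ext a b
      simp [Matrix.vecMulVec_apply]
      ring⟩

theorem tele_aux {V : Type*} [DecidableEq V] {G : SimpleGraph V} (f : V → ℝ) (d : Sym2 V → ℝ)
    {u m : V} (p : G.Walk u m) :
    p.IsPath →
    (∀ (i j : V) (q : G.Walk u i) (h : G.Adj i j), (q.concat h).IsPath → s(i, j) ∈ p.edges →
      d s(i, j) = f j - f i) →
    ∑ e ∈ p.edges.toFinset, d e = f m - f u := by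
  induction p using SimpleGraph.Walk.concatRec with
  | Hnil => intro _ _; simp
  | Hconcat p h ih =>
    intro hp hd
    have hn := hp.isTrail.edges_nodup
    have h1 := ih ((SimpleGraph.Walk.concat_isPath_iff h).1 hp).1 (fun i j q h' hq he =>
      hd i j q h' hq (by rw [SimpleGraph.Walk.edges_concat]; simp [he]))
    have h2 := hd _ _ p h hp (by rw [SimpleGraph.Walk.edges_concat]; simp)
    rw [List.sum_toFinset _ hn, SimpleGraph.Walk.edges_concat]
    rw [SimpleGraph.Walk.edges_concat] at hn
    rw [List.concat_eq_append] at hn ⊢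
    rw [List.sum_toFinset _ (List.nodup_append.1 hn).1] at h1
    simp only [List.map_append, List.sum_append, h1]
    simp [h2]

theorem inter_aux {V : Type*} [DecidableEq V] {G : SimpleGraph V} (x : Sym2 V → ℝ)
    (S : Finset (Sym2 V)) {u i j : V} (q : G.Walk u i) (h : G.Adj i j)
    (hq : (q.concat h).IsPath) :
    ∑ e ∈ S ∩ (q.concat h).edges.toFinset, x e
      = ∑ e ∈ S ∩ q.edges.toFinset, x e + if s(i, j) ∈ S then x s(i, j) else 0 := by
  have hn := hq.isTrail.edges_nodup
  rw [SimpleGraph.Walk.edges_concat, List.concat_eq_append] at hn ⊢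
  have hni : s(i, j) ∉ q.edges := fun hc => by
    have := (List.nodup_append.1 hn).2.2 _ hc s(i, j) (by simp)
    exact this rfl
  rw [List.toFinset_append, Finset.inter_union_distrib_left, Finset.sum_union]
  · congr 1
    by_cases hS : s(i, j) ∈ S
    · simp [hS]
    · simp [hS]
  · rw [Finset.disjoint_left]
    intro e he he'
    simp at he he'
    exact hni (he'.2 ▸ he.2)

theorem sum_incVec (N : ℕ) (F : Fin (N + 1) → ℝ) (h0 : F 0 = 0) (i : Fin (N + 1)) :
    ∑ n : Fin N, F n.succ * incVec N i n = F i := by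
  refine Fin.cases ?_ (fun i => ?_) i
  · simp [incVec, h0]
  · simp [incVec, ← Fin.ext_iff]

/-- **The inverse sensitivity matrix is the reduced weighted Laplacian.**
Let `G` be a tree on the buses `{0,1,…,N}` (`N ≥ 1`) rooted at bus `0`, with
positive reactances `x_e > 0`. Let `X_{mn} = 2 Σ_{e ∈ E_m ∩ E_n} x_e` where `E_m`
is the edge set of the unique path from `0` to `m` (realized by a path `P m`), and
let `L = Σ_{e ∈ edges(G)} (2 x_e)⁻¹ (e_i − e_j)(e_i − e_j)ᵀ` be the reduced
weighted Laplacian. Then `X · L = I`, i.e. `X⁻¹ = L`. -/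
theorem sensitivity_mul_redLaplacian_eq_one
    (N : ℕ) (hN : 1 ≤ N)
    (G : SimpleGraph (Fin (N + 1))) [DecidableRel G.Adj] (hG : G.IsTree)
    (x : Sym2 (Fin (N + 1)) → ℝ) (hx : ∀ e ∈ G.edgeSet, 0 < x e)
    (P : (m : Fin (N + 1)) → G.Walk 0 m) (hP : ∀ m, (P m).IsPath) :
    (Matrix.of fun m n : Fin N =>
        2 * ∑ e ∈ (P m.succ).edges.toFinset ∩ (P n.succ).edges.toFinset, x e)
      * (∑ e ∈ G.edgeFinset, (2 * x e)⁻¹ • edgeMatSym N e) = 1 := by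
  have hac := hG.isAcyclic
  have huniq : ∀ {m} (q : G.Walk 0 m), q.IsPath → P m = q := fun {m} q hq =>
    Subtype.mk.inj (hac.subsingleton_path 0 m |>.elim ⟨P m, hP m⟩ ⟨q, hq⟩)
  ext m k
  set S := (P m.succ).edges.toFinset with hS
  set T : Fin (N + 1) → ℝ := fun n => 2 * ∑ e ∈ S ∩ (P n).edges.toFinset, x e with hT
  have hT0 : T 0 = 0 := by
    have := huniq (SimpleGraph.Walk.nil : G.Walk 0 0) (by simp)
    simp [hT, this]
  set d : Sym2 (Fin (N + 1)) → ℝ :=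
    fun e => (2 * x e)⁻¹ * ∑ n : Fin N, T n.succ * edgeMatSym N e n k with hd
  have hdv : ∀ i j, d s(i, j) =
      (2 * x s(i, j))⁻¹ * ((T i - T j) * (incVec N i k - incVec N j k)) := by
    intro i j
    simp only [hd]
    congr 1
    rw [← sum_incVec N T hT0 i, ← sum_incVec N T hT0 j, ← Finset.sum_sub_distrib, Finset.sum_mul]
    refine Finset.sum_congr rfl fun n _ => ?_
    simp [edgeMatSym, Matrix.vecMulVec_apply]
    ring
  have key : ∀ (i j) (q : G.Walk 0 i) (h : G.Adj i j), (q.concat h).IsPath →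
      d s(i, j) = if s(i, j) ∈ S then incVec N j k - incVec N i k else 0 := by
    intro i j q h hq
    have hx' : x s(i, j) ≠ 0 := (hx s(i, j) h).ne'
    have e1 := huniq _ hq
    have e2 := huniq q ((SimpleGraph.Walk.concat_isPath_iff h).1 hq).1
    rw [hdv]
    simp only [hT, e1, e2, inter_aux x S q h hq]
    split_ifs
    · field_simp
      ring
    · simp
  have hsum : ∑ e ∈ G.edgeFinset, d e = ∑ e ∈ S, d e := by
    symm
    apply Finset.sum_subset
    · intro e he
      rw [hS, List.mem_toFinset] at he
      exact SimpleGraph.mem_edgeFinset.2 ((P m.succ).edges_subset_edgeSet he)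
    · intro e he heS
      induction e using Sym2.ind with
      | _ i j =>
        have h : G.Adj i j := by simpa using he
        by_cases hv : i ∈ (P j).support
        · have := hac.path_concat (hP i) (hP j) h hv
          rw [key i j (P i) h (this ▸ hP j), if_neg heS]
        · have := (hP j).concat hv h.symm
          rw [Sym2.eq_swap] at heS ⊢
          rw [key j i (P j) h.symm this, if_neg heS]
  have htel := tele_aux (fun i => incVec N i k) d (P m.succ) (hP _) (by
    intro i j q h hq he
    rw [key i j q h hq, if_pos (by simpa [hS] using he)])
  have hL : ((Matrix.of fun m n : Fin N =>
        2 * ∑ e ∈ (P m.succ).edges.toFinset ∩ (P n.succ).edges.toFinset, x e)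
      * (∑ e ∈ G.edgeFinset, (2 * x e)⁻¹ • edgeMatSym N e)) m k = ∑ e ∈ G.edgeFinset, d e := by
    rw [Matrix.mul_apply]
    simp only [Matrix.sum_apply, Matrix.smul_apply, Finset.mul_sum, hd, Matrix.of_apply,
      smul_eq_mul]
    rw [Finset.sum_comm]
    refine Finset.sum_congr rfl fun e _ => Finset.sum_congr rfl fun n _ => ?_
    simp only [hT, hS, Finset.mul_sum, Finset.sum_mul]
    refine Finset.sum_congr rfl fun _ _ => ?_
    ring
  rw [hL, hsum, htel]
  simp [incVec, Matrix.one_apply, ← Fin.ext_iff, eq_comm]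
end
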